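/- arXiv:1906.08700 — 8 statements merged into one kernel-verified Lean document; each statement's English description precedes it below -/
import Mathlib

section
/- Let ω > 0 and ε > 0, and set γ_ε = √(1 + 1/ε) + √(1/ε). For a complex number λ, one has 1 + ε·(cos(λω))² = 0 if and only if there exists an integer n ∈ ℤ such that λ = (1/ω)·(π/2 + nπ + i·log γ_ε) or λ = (1/ω)·(π/2 + nπ − i·log γ_ε). -/
/-!
Write `L = log γ_ε`. Since `γ_ε = √(1/ε) + √(1 + (√(1/ε))²)`, `L` is `arsinh √(1/ε)`, so
`sinh² L = 1/ε` and `sin² (iL) = -1/ε`. The equation `1 + ε cos² z = 0`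
therefore says `cos² z - sin² (iL) = 0`, whose left side factors as `cos (z - iL) cos (z + iL)`. The
solutions are read off from the zeros `π/2 + nπ` of the complex cosine.
-/

lemma sinh_log_gamma_sq {ε : ℝ} (hε : 0 < ε) :
    Real.sinh (Real.log (√(1 + 1 / ε) + √(1 / ε))) ^ 2 = 1 / ε := by
  have h : (0 : ℝ) ≤ 1 / ε := by positivity
  have harsinh : Real.log (√(1 + 1 / ε) + √(1 / ε)) = Real.arsinh √(1 / ε) := by
    rw [Real.arsinh, Real.sq_sqrt h, add_comm]
  rw [harsinh, Real.sinh_arsinh, Real.sq_sqrt h]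

lemma cos_sub_mul_cos_add (z w : ℂ) :
    Complex.cos (z - w) * Complex.cos (z + w) = Complex.cos z ^ 2 - Complex.sin w ^ 2 := by
  rw [Complex.cos_sub, Complex.cos_add]
  linear_combination Complex.cos z ^ 2 * Complex.sin_sq_add_cos_sq w
    - Complex.sin w ^ 2 * Complex.sin_sq_add_cos_sq z

/-- The quasi-reversibility equation in factored form, in the variable `z = λω`. -/
lemma one_add_mul_cos_sq_eq_zero_iff {ε : ℝ} (hε : 0 < ε) {L : ℝ}
    (hL : Real.sinh L ^ 2 = 1 / ε) (z : ℂ) :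
    1 + (ε : ℂ) * Complex.cos z ^ 2 = 0 ↔
      Complex.cos (z - Complex.I * L) = 0 ∨ Complex.cos (z + Complex.I * L) = 0 := by
  have hε' : (ε : ℂ) ≠ 0 := by exact_mod_cast hε.ne'
  have hsinh : Complex.sinh (L : ℂ) ^ 2 = 1 / (ε : ℂ) := by
    exact_mod_cast congrArg Complex.ofReal hL
  have hsin : (ε : ℂ) * Complex.sin (Complex.I * L) ^ 2 = -1 := by
    rw [mul_comm Complex.I, Complex.sin_mul_I, mul_pow, hsinh, Complex.I_sq]
    field_simp
  have hfactor : 1 + (ε : ℂ) * Complex.cos z ^ 2 =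
      ε * (Complex.cos (z - Complex.I * L) * Complex.cos (z + Complex.I * L)) := by
    rw [cos_sub_mul_cos_add]
    linear_combination hsin
  rw [hfactor, mul_eq_zero_iff_left hε', mul_eq_zero]

/-- Characterization of the solutions of `1 + ε cos²(λω) = 0`:
the eigenvalues of the quasi-reversibility symbol are
`λ = (π/2 + nπ ± i log γ_ε)/ω` with `γ_ε = √(1+1/ε) + √(1/ε)`. -/
theorem eigenvalue_characterization (ω ε : ℝ) (hω : 0 < ω) (hε : 0 < ε) (l : ℂ) :
    1 + (ε : ℂ) * (Complex.cos (l * (ω : ℂ))) ^ 2 = 0 ↔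
      ∃ n : ℤ,
        l = (1 / (ω : ℂ)) * (((Real.pi : ℂ) / 2) + (n : ℂ) * (Real.pi : ℂ)
              + Complex.I * ((Real.log (Real.sqrt (1 + 1 / ε) + Real.sqrt (1 / ε)) : ℝ) : ℂ)) ∨
        l = (1 / (ω : ℂ)) * (((Real.pi : ℂ) / 2) + (n : ℂ) * (Real.pi : ℂ)
              - Complex.I * ((Real.log (Real.sqrt (1 + 1 / ε) + Real.sqrt (1 / ε)) : ℝ) : ℂ)) := by
  have hω' : (ω : ℂ) ≠ 0 := by exact_mod_cast hω.ne'
  rw [one_add_mul_cos_sq_eq_zero_iff hε (sinh_log_gamma_sq hε), Complex.cos_eq_zero_iff,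
    Complex.cos_eq_zero_iff, ← exists_or]
  generalize ((Real.log (√(1 + 1 / ε) + √(1 / ε)) : ℝ) : ℂ) = L
  have hdiv (w : ℂ) : l = 1 / (ω : ℂ) * w ↔ l * ω = w := by
    rw [one_div, inv_mul_eq_div, eq_div_iff hω']
  refine exists_congr fun n => or_congr ?_ ?_
  · rw [hdiv, sub_eq_iff_eq_add]
    ring_nf
  · rw [hdiv, ← eq_sub_iff_add_eq]
    ring_nf
end

section
/- Let ω > 0, ε > 0 and λ ∈ ℂ. There exists a pair of functions φ, ψ : ℝ → ℂ, each twice continuously differentiable on [0, ω], not both identically zero on [0, ω], satisfying φ''(θ) + λ²·φ(θ) = 0 and ψ''(θ) + λ²·ψ(θ) = 0 for all θ ∈ [0, ω], together with the boundary conditions φ(0) = 0, ψ(ω) = 0, φ'(0) − ψ'(0) = 0 and ε·φ'(ω) + ψ'(ω) = 0, if and only if 1 + ε·(cos(λω))² = 0. -/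
/-!
A solution `f` of `f'' + l² f = 0` on `[0, ω]` satisfies the propagation formula
`f'(x) = f'(y) cos (l (x - y)) - l f(y) sin (l (x - y))` (`deriv_propagation`), also for `l = 0`,
because the right-hand side has zero derivative in `y`.

With `c = cos (l ω)`, the conditions `φ(0) = 0` and `ψ(ω) = 0` give `φ'(ω) = φ'(0) c` and
`ψ'(0) = ψ'(ω) c`, so the two coupling conditions reduce to `ψ'(ω) (1 + ε c²) = 0`. If
`1 + ε c² ≠ 0` then `ψ'(ω) = φ'(0) = 0`, and both functions vanish
(`eq_zero_of_cauchy_data`). If `1 + ε c² = 0`, then `φ(θ) = c sin (l θ)` and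
`ψ(θ) = sin (l (θ - ω))` solve the problem; `ψ(0) = 0` would force `c² = 1`, hence `ε = -1`.
-/

/-- A function with zero derivative on `[0, ω]` takes equal values at any two points. -/
lemma eq_of_deriv_zero_Icc {ω : ℝ} {g : ℝ → ℂ}
    (hg : ∀ t ∈ Set.Icc (0:ℝ) ω, HasDerivAt g 0 t) {x y : ℝ}
    (hx : x ∈ Set.Icc (0:ℝ) ω) (hy : y ∈ Set.Icc (0:ℝ) ω) : g x = g y := by
  have h := constant_of_has_deriv_right_zero
    (fun t ht => (hg t ht).continuousAt.continuousWithinAt)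
    (fun t ht => (hg t ⟨ht.1, ht.2.le⟩).hasDerivWithinAt)
  rw [h x hx, h y hy]

lemma deriv_propagation {ω : ℝ} {l : ℂ} {f df ddf : ℝ → ℂ}
    (hf : ∀ t ∈ Set.Icc (0:ℝ) ω, HasDerivAt f (df t) t)
    (hdf : ∀ t ∈ Set.Icc (0:ℝ) ω, HasDerivAt df (ddf t) t)
    (hode : ∀ t ∈ Set.Icc (0:ℝ) ω, ddf t + l ^ 2 * f t = 0) {x y : ℝ}
    (hx : x ∈ Set.Icc (0:ℝ) ω) (hy : y ∈ Set.Icc (0:ℝ) ω) :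
    df x = df y * Complex.cos (l * (x - y)) - l * f y * Complex.sin (l * (x - y)) := by
  have key := eq_of_deriv_zero_Icc (ω := ω)
    (g := fun t : ℝ => df t * Complex.cos (l * (x - t)) - l * f t * Complex.sin (l * (x - t)))
    (fun t ht => by
      have hin : HasDerivAt (fun t : ℝ => l * ((x : ℂ) - t)) (l * (-1)) t :=
        ((Complex.ofRealCLM.hasDerivAt (x := t)).const_sub (x : ℂ)).const_mul l
      have h := ((hdf t ht).mul ((Complex.hasDerivAt_cos _).comp t hin)).sub
        (((hf t ht).const_mul l).mul ((Complex.hasDerivAt_sin _).comp t hin))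
      refine h.congr_deriv ?_
      simp only [Function.comp_apply]
      linear_combination Complex.cos (l * (x - t)) * hode t ht) hx hy
  simpa using key

/-- Zero Cauchy data at one point of `[0, ω]` force a solution to vanish on `[0, ω]`. -/
lemma eq_zero_of_cauchy_data {ω : ℝ} {l : ℂ} {f df ddf : ℝ → ℂ}
    (hf : ∀ t ∈ Set.Icc (0:ℝ) ω, HasDerivAt f (df t) t)
    (hdf : ∀ t ∈ Set.Icc (0:ℝ) ω, HasDerivAt df (ddf t) t)
    (hode : ∀ t ∈ Set.Icc (0:ℝ) ω, ddf t + l ^ 2 * f t = 0) {x y : ℝ}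
    (hx : x ∈ Set.Icc (0:ℝ) ω) (hy : y ∈ Set.Icc (0:ℝ) ω)
    (h0 : f y = 0) (h1 : df y = 0) : f x = 0 := by
  rw [← h0]
  refine eq_of_deriv_zero_Icc (fun t ht => ?_) hx hy
  have h := deriv_propagation hf hdf hode ht hy
  rw [h0, h1] at h
  have h2 : df t = 0 := by simpa using h
  exact h2 ▸ hf t ht

/-- The derivatives of `θ ↦ sin (l (θ - a))` and of its derivative. -/
lemma hasDerivAt_shifted_sin (l : ℂ) (a t : ℝ) :
    HasDerivAt (fun t : ℝ => Complex.sin (l * (t - a))) (l * Complex.cos (l * (t - a))) t ∧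
    HasDerivAt (fun t : ℝ => l * Complex.cos (l * (t - a)))
      (-l ^ 2 * Complex.sin (l * (t - a))) t := by
  have hin : HasDerivAt (fun t : ℝ => l * ((t : ℂ) - a)) (l * 1) t :=
    ((Complex.ofRealCLM.hasDerivAt (x := t)).sub_const (a : ℂ)).const_mul l
  constructor
  · refine ((Complex.hasDerivAt_sin _).comp t hin).congr_deriv ?_
    ring
  · refine (((Complex.hasDerivAt_cos _).comp t hin).const_mul l).congr_deriv ?_
    ring

/-- The eigenvalue problem for the quasi-reversibility symbol `𝓛_ε(λ)`
has a nontrivial solution iff `1 + ε cos²(λω) = 0`.  "Twice continuously differentiable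
on `[0, ω]`" is encoded by explicit first and second derivative functions, with
`HasDerivAt` at each point of `[0, ω]` and continuity of the second derivatives there. -/
theorem symbol_eigenvalue_iff (ω ε : ℝ) (hω : 0 < ω) (hε : 0 < ε) (l : ℂ) :
    (∃ φ dφ ddφ ψ dψ ddψ : ℝ → ℂ,
        (∀ θ ∈ Set.Icc (0:ℝ) ω, HasDerivAt φ (dφ θ) θ) ∧
        (∀ θ ∈ Set.Icc (0:ℝ) ω, HasDerivAt dφ (ddφ θ) θ) ∧
        ContinuousOn ddφ (Set.Icc (0:ℝ) ω) ∧
        (∀ θ ∈ Set.Icc (0:ℝ) ω, HasDerivAt ψ (dψ θ) θ) ∧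
        (∀ θ ∈ Set.Icc (0:ℝ) ω, HasDerivAt dψ (ddψ θ) θ) ∧
        ContinuousOn ddψ (Set.Icc (0:ℝ) ω) ∧
        ¬ (∀ θ ∈ Set.Icc (0:ℝ) ω, φ θ = 0 ∧ ψ θ = 0) ∧
        (∀ θ ∈ Set.Icc (0:ℝ) ω, ddφ θ + l ^ 2 * φ θ = 0) ∧
        (∀ θ ∈ Set.Icc (0:ℝ) ω, ddψ θ + l ^ 2 * ψ θ = 0) ∧
        φ 0 = 0 ∧ ψ ω = 0 ∧ dφ 0 - dψ 0 = 0 ∧ (ε : ℂ) * dφ ω + dψ ω = 0)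
    ↔ 1 + (ε : ℂ) * (Complex.cos (l * (ω : ℂ))) ^ 2 = 0 := by
  have h0mem : (0:ℝ) ∈ Set.Icc (0:ℝ) ω := ⟨le_rfl, hω.le⟩
  have hωmem : ω ∈ Set.Icc (0:ℝ) ω := ⟨hω.le, le_rfl⟩
  constructor
  · rintro ⟨φ, dφ, ddφ, ψ, dψ, ddψ, hφ, hdφ, -, hψ, hdψ, -, hne, oφ, oψ, b1, b2, b3, b4⟩
    by_contra hc
    have p1 := deriv_propagation hφ hdφ oφ hωmem h0mem
    have p2 := deriv_propagation hψ hdψ oψ h0mem hωmem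
    simp only [b1, Complex.ofReal_zero, sub_zero, mul_zero, zero_mul] at p1
    simp only [b2, Complex.ofReal_zero, zero_sub, mul_zero, zero_mul, sub_zero, mul_neg,
      Complex.cos_neg] at p2
    have hψω : dψ ω = 0 := by
      have : dψ ω * (1 + (ε : ℂ) * (Complex.cos (l * (ω : ℂ))) ^ 2) = 0 := by
        linear_combination b4 - (ε : ℂ) * p1 - (ε : ℂ) * Complex.cos (l * ω) * b3
          - (ε : ℂ) * Complex.cos (l * ω) * p2
      exact (mul_eq_zero.mp this).resolve_right hc
    have hφ0 : dφ 0 = 0 := by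
      rw [hψω, zero_mul] at p2
      rw [p2, sub_zero] at b3
      exact b3
    exact hne fun θ hθ => ⟨eq_zero_of_cauchy_data hφ hdφ oφ hθ h0mem b1 hφ0,
      eq_zero_of_cauchy_data hψ hdψ oψ hθ hωmem b2 hψω⟩
  · intro hc
    set c := Complex.cos (l * (ω : ℂ)) with hcdef
    have hS0 := fun t : ℝ => hasDerivAt_shifted_sin l 0 t
    have hSω := fun t : ℝ => hasDerivAt_shifted_sin l ω t
    refine ⟨fun t => c * Complex.sin (l * (t - (0:ℝ))),
      fun t => c * (l * Complex.cos (l * (t - (0:ℝ)))),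
      fun t => c * (-l ^ 2 * Complex.sin (l * (t - (0:ℝ)))),
      fun t => Complex.sin (l * (t - ω)),
      fun t => l * Complex.cos (l * (t - ω)),
      fun t => -l ^ 2 * Complex.sin (l * (t - ω)),
      fun t _ => (hS0 t).1.const_mul c, fun t _ => (hS0 t).2.const_mul c, by fun_prop,
      fun t _ => (hSω t).1, fun t _ => (hSω t).2, by fun_prop, ?_,
      fun t _ => by ring, fun t _ => by ring, by simp, by simp, ?_, ?_⟩
    · intro hz
      have hs : Complex.sin (l * ω) = 0 := by simpa using (hz 0 h0mem).2
      have hsq := Complex.sin_sq_add_cos_sq (l * ω)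
      rw [← hcdef, hs] at hsq
      have hε1 : (1 + ε : ℂ) = 0 := by linear_combination hc - (ε : ℂ) * hsq
      have : (1 + ε : ℝ) = 0 := by exact_mod_cast hε1
      linarith
    · simp [← hcdef, mul_comm]
    · simp only [Complex.ofReal_zero, sub_zero, sub_self, mul_zero, Complex.cos_zero, ← hcdef]
      linear_combination l * hc
end

section
/- Let ω > 0, ε > 0 and λ ∈ ℂ satisfy 1 + ε·(cos(λω))² = 0. Define φ(θ) = cos(λω)·sin(λθ) and ψ(θ) = sin(λ(θ − ω)) for θ ∈ ℝ. Then φ''(θ) + λ²·φ(θ) = 0 and ψ''(θ) + λ²·ψ(θ) = 0 for all θ ∈ ℝ, φ(0) = 0, ψ(ω) = 0, φ'(0) = ψ'(0) = λ·cos(λω), ε·φ'(ω) + ψ'(ω) = 0, and ψ is not identically zero on [0, ω]. -/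
/-!
Differentiating `φ` and `ψ` twice gives the differential equations and the boundary values;
the coupling `ε φ'(ω) + ψ'(ω) = 0` is `λ` times the hypothesis `1 + ε cos²(λω) = 0`.
For the nontriviality of `ψ`, already `ψ(0) = -sin(λω) ≠ 0`: otherwise `cos²(λω) = 1`, and the
hypothesis would read `1 + ε = 0`, contradicting `ε > 0`.
-/

/-- The eigenfunction `φ(θ) = cos(λω) sin(λθ)` of the quasi-reversibility symbol. -/
noncomputable def phiEF (ω : ℝ) (l : ℂ) : ℝ → ℂ :=
  fun θ => Complex.cos (l * (ω : ℂ)) * Complex.sin (l * (θ : ℂ))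

/-- The eigenfunction `ψ(θ) = sin(λ(θ − ω))` of the quasi-reversibility symbol. -/
noncomputable def psiEF (ω : ℝ) (l : ℂ) : ℝ → ℂ :=
  fun θ => Complex.sin (l * ((θ : ℂ) - (ω : ℂ)))

lemma hasDerivAt_sin_affine (l c : ℂ) (θ : ℝ) :
    HasDerivAt (fun t : ℝ => Complex.sin (l * ((t : ℂ) - c)))
      (l * Complex.cos (l * ((θ : ℂ) - c))) θ := by
  have h : HasDerivAt (fun t : ℝ => l * ((t : ℂ) - c)) l θ := by
    simpa using ((Complex.ofRealCLM.hasDerivAt (x := θ)).sub_const c).const_mul l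
  simpa [Function.comp_def, mul_comm] using (Complex.hasDerivAt_sin _).comp θ h

lemma hasDerivAt_cos_affine (l c : ℂ) (θ : ℝ) :
    HasDerivAt (fun t : ℝ => Complex.cos (l * ((t : ℂ) - c)))
      (-(l * Complex.sin (l * ((θ : ℂ) - c)))) θ := by
  have h : HasDerivAt (fun t : ℝ => l * ((t : ℂ) - c)) l θ := by
    simpa using ((Complex.ofRealCLM.hasDerivAt (x := θ)).sub_const c).const_mul l
  simpa [Function.comp_def, mul_comm] using (Complex.hasDerivAt_cos _).comp θ h

lemma deriv_phiEF (ω : ℝ) (l : ℂ) :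
    deriv (phiEF ω l) =
      fun θ : ℝ => Complex.cos (l * (ω : ℂ)) * (l * Complex.cos (l * (θ : ℂ))) := by
  funext θ
  have h := (hasDerivAt_sin_affine l 0 θ).const_mul (Complex.cos (l * (ω : ℂ)))
  simp only [sub_zero] at h
  exact h.deriv

lemma deriv_psiEF (ω : ℝ) (l : ℂ) :
    deriv (psiEF ω l) = fun θ : ℝ => l * Complex.cos (l * ((θ : ℂ) - (ω : ℂ))) := by
  funext θ
  exact (hasDerivAt_sin_affine l ω θ).deriv

/-- If `1 + ε cos²(λω) = 0` then `(φ, ψ)` above is an eigenpair of the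
quasi-reversibility symbol: both solve `y'' + λ² y = 0`, the boundary conditions hold
with `φ'(0) = ψ'(0) = λ cos(λω)` and `ε φ'(ω) + ψ'(ω) = 0`, and `ψ` is not
identically zero on `[0, ω]`. -/
theorem explicit_eigenfunctions (ω ε : ℝ) (hω : 0 < ω) (hε : 0 < ε) (l : ℂ)
    (hl : 1 + (ε : ℂ) * (Complex.cos (l * (ω : ℂ))) ^ 2 = 0) :
    (∀ θ : ℝ, deriv (deriv (phiEF ω l)) θ + l ^ 2 * phiEF ω l θ = 0) ∧
    (∀ θ : ℝ, deriv (deriv (psiEF ω l)) θ + l ^ 2 * psiEF ω l θ = 0) ∧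
    phiEF ω l 0 = 0 ∧ psiEF ω l ω = 0 ∧
    deriv (phiEF ω l) 0 = l * Complex.cos (l * (ω : ℂ)) ∧
    deriv (psiEF ω l) 0 = l * Complex.cos (l * (ω : ℂ)) ∧
    (ε : ℂ) * deriv (phiEF ω l) ω + deriv (psiEF ω l) ω = 0 ∧
    ¬ (∀ θ ∈ Set.Icc (0:ℝ) ω, psiEF ω l θ = 0) := by
  refine ⟨fun θ => ?_, fun θ => ?_, by simp [phiEF], by simp [psiEF], ?_, ?_, ?_, fun h => ?_⟩
  · have h := ((hasDerivAt_cos_affine l 0 θ).const_mul l).const_mul (Complex.cos (l * (ω : ℂ)))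
    simp only [sub_zero] at h
    rw [deriv_phiEF, h.deriv, phiEF]
    ring
  · rw [deriv_psiEF, ((hasDerivAt_cos_affine l ω θ).const_mul l).deriv, psiEF]
    ring
  · simp [deriv_phiEF, mul_comm]
  · simp [deriv_psiEF]
  · simp only [deriv_phiEF, deriv_psiEF, sub_self, mul_zero, Complex.cos_zero]
    linear_combination l * hl
  · have h0 : Complex.sin (l * (ω : ℂ)) = 0 := by
      simpa [psiEF] using h 0 ⟨le_rfl, hω.le⟩
    have h1 : ((1 + ε : ℝ) : ℂ) = 0 := by
      push_cast
      linear_combination hl + (ε : ℂ) * Complex.sin (l * (ω : ℂ)) * h0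
        - (ε : ℂ) * Complex.sin_sq_add_cos_sq (l * (ω : ℂ))
    have h2 : 1 + ε = 0 := by exact_mod_cast h1
    linarith
end

section
/- Let ω > 0, ε > 0 and μ ∈ ℂ. There exists a pair of functions g, h : ℝ → ℂ, each twice continuously differentiable on [0, ω], not both identically zero on [0, ω], satisfying g''(θ) + μ²·g(θ) = 0 and h''(θ) + μ²·h(θ) = 0 for all θ ∈ [0, ω], together with the boundary conditions g'(ω) = 0, h'(0) = 0, g(ω) − h(ω) = 0 and ε·g(0) + h(0) = 0, if and only if 1 + ε·(cos(μω))² = 0. Moreover, when 1 + ε·(cos(μω))² = 0, the pair g(θ) = cos(μω)·cos(μ(θ − ω)), h(θ) = cos(μθ) is such a nonzero solution. -/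
/-!
A solution of `y'' + μ² y = 0` with `y'(c) = 0` is `y(θ) = y(c) cos(μ(θ - c))`
(`eq_cos_of_ode`). Hence an eigenpair has the form `g(θ) = g(ω) cos(μ(θ - ω))`,
`h(θ) = h(0) cos(μθ)`, and the two coupling conditions give `g(ω) = h(0) cos(μω)` and
`h(0) (1 + ε cos²(μω)) = 0`. If `h(0)` vanished, so would `g(ω)`, and with them the whole pair;
therefore `1 + ε cos²(μω) = 0`. Conversely the explicit pair is checked by differentiation, and it
is nonzero because `h(0) = 1`.
-/

/-- The eigenvalue problem for the adjoint symbol `𝓛*_ε`: the pair `(g, h)` is twice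
continuously differentiable on `[0, ω]` (encoded via explicit derivative functions),
not both identically zero there, solves `y'' + μ² y = 0` on `[0, ω]`, and satisfies the
adjoint boundary conditions `g'(ω) = 0`, `h'(0) = 0`, `g(ω) − h(ω) = 0`,
`ε g(0) + h(0) = 0`. -/
def IsAdjointEigenpair (ω ε : ℝ) (μ : ℂ) (g h : ℝ → ℂ) : Prop :=
  ∃ dg ddg dh ddh : ℝ → ℂ,
    (∀ θ ∈ Set.Icc (0:ℝ) ω, HasDerivAt g (dg θ) θ) ∧
    (∀ θ ∈ Set.Icc (0:ℝ) ω, HasDerivAt dg (ddg θ) θ) ∧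
    ContinuousOn ddg (Set.Icc (0:ℝ) ω) ∧
    (∀ θ ∈ Set.Icc (0:ℝ) ω, HasDerivAt h (dh θ) θ) ∧
    (∀ θ ∈ Set.Icc (0:ℝ) ω, HasDerivAt dh (ddh θ) θ) ∧
    ContinuousOn ddh (Set.Icc (0:ℝ) ω) ∧
    ¬ (∀ θ ∈ Set.Icc (0:ℝ) ω, g θ = 0 ∧ h θ = 0) ∧
    (∀ θ ∈ Set.Icc (0:ℝ) ω, ddg θ + μ ^ 2 * g θ = 0) ∧
    (∀ θ ∈ Set.Icc (0:ℝ) ω, ddh θ + μ ^ 2 * h θ = 0) ∧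
    dg ω = 0 ∧ dh 0 = 0 ∧ g ω - h ω = 0 ∧ (ε : ℂ) * g 0 + h 0 = 0

lemma eq_of_hasDerivAt_zero {ω : ℝ} {f : ℝ → ℂ}
    (hf : ∀ θ ∈ Set.Icc (0:ℝ) ω, HasDerivAt f 0 θ) {a b : ℝ}
    (ha : a ∈ Set.Icc (0:ℝ) ω) (hb : b ∈ Set.Icc (0:ℝ) ω) : f a = f b := by
  have h := constant_of_has_deriv_right_zero (f := f) (a := 0) (b := ω)
    (fun x hx => (hf x hx).continuousAt.continuousWithinAt)
    (fun x hx => (hf x ⟨hx.1, hx.2.le⟩).hasDerivWithinAt)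
  rw [h a ha, h b hb]

lemma hasDerivAt_cos_shift (μ : ℂ) (c θ : ℝ) :
    HasDerivAt (fun t : ℝ => Complex.cos (μ * ((t : ℂ) - (c : ℂ))))
      (-(μ * Complex.sin (μ * ((θ : ℂ) - (c : ℂ))))) θ := by
  have h1 : HasDerivAt (fun z : ℂ => μ * (z - (c : ℂ))) (μ * 1) (θ : ℂ) :=
    ((hasDerivAt_id (θ : ℂ)).sub_const (c : ℂ)).const_mul μ
  exact h1.ccos.comp_ofReal.congr_deriv (by ring)

lemma hasDerivAt_sin_shift (μ : ℂ) (c θ : ℝ) :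
    HasDerivAt (fun t : ℝ => Complex.sin (μ * ((t : ℂ) - (c : ℂ))))
      (μ * Complex.cos (μ * ((θ : ℂ) - (c : ℂ)))) θ := by
  have h1 : HasDerivAt (fun z : ℂ => μ * (z - (c : ℂ))) (μ * 1) (θ : ℂ) :=
    ((hasDerivAt_id (θ : ℂ)).sub_const (c : ℂ)).const_mul μ
  exact h1.csin.comp_ofReal.congr_deriv (by ring)

/-- Uniqueness for `y'' + μ² y = 0` with `y'(c) = 0`. With `s = θ - c`, the two quantities
`μ y cos(μs) - y' sin(μs)` and `μ y sin(μs) + y' cos(μs)` are constant, which determines `μ y`;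
for `μ = 0` the second one says `y' = 0`. -/
lemma eq_cos_of_ode {ω : ℝ} {μ : ℂ} {y dy ddy : ℝ → ℂ} {c : ℝ}
    (hc : c ∈ Set.Icc (0:ℝ) ω)
    (hy : ∀ θ ∈ Set.Icc (0:ℝ) ω, HasDerivAt y (dy θ) θ)
    (hdy : ∀ θ ∈ Set.Icc (0:ℝ) ω, HasDerivAt dy (ddy θ) θ)
    (hode : ∀ θ ∈ Set.Icc (0:ℝ) ω, ddy θ + μ ^ 2 * y θ = 0)
    (hdc : dy c = 0) {θ : ℝ} (hθ : θ ∈ Set.Icc (0:ℝ) ω) :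
    y θ = y c * Complex.cos (μ * ((θ : ℂ) - (c : ℂ))) := by
  have hB : ∀ t ∈ Set.Icc (0:ℝ) ω,
      μ * y t * Complex.sin (μ * ((t : ℂ) - (c : ℂ)))
        + dy t * Complex.cos (μ * ((t : ℂ) - (c : ℂ))) = 0 := by
    intro t ht
    have := eq_of_hasDerivAt_zero
      (f := fun t : ℝ => μ * y t * Complex.sin (μ * ((t : ℂ) - (c : ℂ)))
        + dy t * Complex.cos (μ * ((t : ℂ) - (c : ℂ))))
      (fun x hx => ((((hy x hx).const_mul μ).mul (hasDerivAt_sin_shift μ c x)).add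
        ((hdy x hx).mul (hasDerivAt_cos_shift μ c x))).congr_deriv (by
          linear_combination Complex.cos (μ * ((x : ℂ) - (c : ℂ))) * hode x hx)) ht hc
    simpa [hdc] using this
  have hA : μ * y θ * Complex.cos (μ * ((θ : ℂ) - (c : ℂ)))
        - dy θ * Complex.sin (μ * ((θ : ℂ) - (c : ℂ))) = μ * y c := by
    have := eq_of_hasDerivAt_zero
      (f := fun t : ℝ => μ * y t * Complex.cos (μ * ((t : ℂ) - (c : ℂ)))
        - dy t * Complex.sin (μ * ((t : ℂ) - (c : ℂ))))
      (fun x hx => ((((hy x hx).const_mul μ).mul (hasDerivAt_cos_shift μ c x)).sub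
        ((hdy x hx).mul (hasDerivAt_sin_shift μ c x))).congr_deriv (by
          linear_combination -Complex.sin (μ * ((x : ℂ) - (c : ℂ))) * hode x hx)) hθ hc
    simpa [hdc] using this
  by_cases hμ : μ = 0
  · have h0 : ∀ t ∈ Set.Icc (0:ℝ) ω, HasDerivAt y 0 t := fun t ht => by
      have hdt : dy t = 0 := by simpa [hμ] using hB t ht
      exact hdt ▸ hy t ht
    simpa [hμ] using eq_of_hasDerivAt_zero h0 hθ hc
  · apply mul_left_cancel₀ hμ
    linear_combination Complex.cos (μ * ((θ : ℂ) - (c : ℂ))) * hA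
      + Complex.sin (μ * ((θ : ℂ) - (c : ℂ))) * hB θ hθ
      - μ * y θ * Complex.sin_sq_add_cos_sq (μ * ((θ : ℂ) - (c : ℂ)))

lemma explicit_isAdjointEigenpair {ω ε : ℝ} (hω : 0 < ω) {μ : ℂ}
    (H : 1 + (ε : ℂ) * (Complex.cos (μ * (ω : ℂ))) ^ 2 = 0) :
    IsAdjointEigenpair ω ε μ
      (fun θ => Complex.cos (μ * (ω : ℂ)) * Complex.cos (μ * ((θ : ℂ) - (ω : ℂ))))
      (fun θ => Complex.cos (μ * (θ : ℂ))) := by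
  refine ⟨fun θ => Complex.cos (μ * ω) * -(μ * Complex.sin (μ * ((θ : ℂ) - (ω : ℂ)))),
    fun θ => Complex.cos (μ * ω) * -(μ * (μ * Complex.cos (μ * ((θ : ℂ) - (ω : ℂ))))),
    fun θ => -(μ * Complex.sin (μ * θ)),
    fun θ => -(μ * (μ * Complex.cos (μ * θ))), ?_, ?_, ?_, ?_, ?_, ?_, ?_, ?_, ?_, ?_, ?_, ?_, ?_⟩
  · exact fun θ _ => (hasDerivAt_cos_shift μ ω θ).const_mul _
  · exact fun θ _ => (((hasDerivAt_sin_shift μ ω θ).const_mul μ).neg).const_mul _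
  · fun_prop
  · intro θ _
    simpa using hasDerivAt_cos_shift μ 0 θ
  · intro θ _
    simpa using ((hasDerivAt_sin_shift μ 0 θ).const_mul μ).fun_neg
  · fun_prop
  · intro h
    simpa using (h 0 ⟨le_rfl, hω.le⟩).2
  · intro θ _
    ring
  · intro θ _
    ring
  · simp
  · simp
  · simp
  · simp only [Complex.ofReal_zero, zero_sub, mul_zero, Complex.cos_zero, mul_neg, Complex.cos_neg]
    linear_combination H

/-- The adjoint eigenvalue problem has a nontrivial solution iff
`1 + ε cos²(μω) = 0`; moreover, in that case the explicit pair
`g(θ) = cos(μω) cos(μ(θ−ω))`, `h(θ) = cos(μθ)` is such a nonzero solution. -/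
theorem adjoint_symbol_eigenvalue_iff (ω ε : ℝ) (hω : 0 < ω) (hε : 0 < ε) (μ : ℂ) :
    ((∃ g h : ℝ → ℂ, IsAdjointEigenpair ω ε μ g h) ↔
        1 + (ε : ℂ) * (Complex.cos (μ * (ω : ℂ))) ^ 2 = 0) ∧
    (1 + (ε : ℂ) * (Complex.cos (μ * (ω : ℂ))) ^ 2 = 0 →
      IsAdjointEigenpair ω ε μ
        (fun θ => Complex.cos (μ * (ω : ℂ)) * Complex.cos (μ * ((θ : ℂ) - (ω : ℂ))))
        (fun θ => Complex.cos (μ * (θ : ℂ)))) := by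
  refine ⟨⟨?_, fun H => ⟨_, _, explicit_isAdjointEigenpair hω H⟩⟩,
    fun H => explicit_isAdjointEigenpair hω H⟩
  rintro ⟨g, h, dg, ddg, dh, ddh, hg, hdg, -, hh, hdh, -, hne, hgo, hho, hgω, hh0, hgh, hε0⟩
  have m0 : (0:ℝ) ∈ Set.Icc (0:ℝ) ω := ⟨le_rfl, hω.le⟩
  have mω : ω ∈ Set.Icc (0:ℝ) ω := ⟨hω.le, le_rfl⟩
  have hG := fun θ hθ => eq_cos_of_ode mω hg hdg hgo hgω (θ := θ) hθ
  have hH := fun θ hθ => eq_cos_of_ode m0 hh hdh hho hh0 (θ := θ) hθ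
  have e1 : g 0 = g ω * Complex.cos (μ * ω) := by
    simpa using hG 0 m0
  have e2 : h ω = h 0 * Complex.cos (μ * ω) := by
    simpa using hH ω mω
  have e3 : h 0 * (1 + (ε : ℂ) * (Complex.cos (μ * (ω : ℂ))) ^ 2) = 0 := by
    linear_combination hε0 - ε * e1 - ε * Complex.cos (μ * ω) * (hgh + e2)
  refine (mul_eq_zero.mp e3).resolve_left fun h00 => hne fun θ hθ => ?_
  have gω0 : g ω = 0 := by
    rw [sub_eq_zero.mp hgh, e2, h00, zero_mul]
  exact ⟨by rw [hG θ hθ, gω0, zero_mul], by rw [hH θ hθ, h00, zero_mul]⟩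
end

section
/- Let ω > 0, ε > 0 and λ ∈ ℂ. Let φ, ψ, g, h : ℝ → ℂ be twice continuously differentiable on [0, ω] and satisfy the boundary conditions φ(0) = 0, ψ(ω) = 0, φ'(0) − ψ'(0) = 0, ε·φ'(ω) + ψ'(ω) = 0, g'(ω) = 0, h'(0) = 0, g(ω) − h(ω) = 0 and ε·g(0) + h(0) = 0. Then ∫₀^ω (−(λ²φ(θ) + φ''(θ)))·conj(g(θ)) dθ + (1/ε)·∫₀^ω (−(λ²ψ(θ) + ψ''(θ)))·conj(h(θ)) dθ = ∫₀^ω φ(θ)·conj(−(conj(λ)²·g(θ) + g''(θ))) dθ + (1/ε)·∫₀^ω ψ(θ)·conj(−(conj(λ)²·h(θ) + h''(θ))) dθ. -/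
/-!
Since `conj (conj l ^ 2) = l ^ 2`, the zeroth-order terms on the two sides agree pointwise, and
Green's second identity (`green_identity`) turns the difference of the two sides into boundary
terms `u * conj v' - u' * conj v`, taken for `(u, v) = (φ, g)` and, with weight `1 / ε`, for
`(ψ, h)`. The Dirichlet conditions on `φ`, `ψ` and the Neumann conditions on `g`, `h` leave
`φ'(0) conj g(0) - φ'(ω) conj g(ω) + (1 / ε) (ψ'(0) conj h(0) - ψ'(ω) conj h(ω))`, which vanishes by
the four coupling conditions.
-/

open ComplexConjugate in
/-- Green's second identity for the operator `-(l ^ 2 + d²/dθ²)` on `[0, ω]`: the integrand of the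
difference is the derivative of `u * conj v' - u' * conj v`. -/
theorem green_identity {ω : ℝ} (hω : 0 ≤ ω) (l : ℂ) {u du ddu v dv ddv : ℝ → ℂ}
    (hu1 : ∀ θ ∈ Set.Icc (0:ℝ) ω, HasDerivAt u (du θ) θ)
    (hu2 : ∀ θ ∈ Set.Icc (0:ℝ) ω, HasDerivAt du (ddu θ) θ)
    (hu3 : ContinuousOn ddu (Set.Icc (0:ℝ) ω))
    (hv1 : ∀ θ ∈ Set.Icc (0:ℝ) ω, HasDerivAt v (dv θ) θ)
    (hv2 : ∀ θ ∈ Set.Icc (0:ℝ) ω, HasDerivAt dv (ddv θ) θ)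
    (hv3 : ContinuousOn ddv (Set.Icc (0:ℝ) ω)) :
    (∫ θ in (0:ℝ)..ω, (-(l ^ 2 * u θ + ddu θ)) * conj (v θ))
      = (∫ θ in (0:ℝ)..ω, u θ * conj (-((conj l) ^ 2 * v θ + ddv θ)))
        + ((u ω * conj (dv ω) - du ω * conj (v ω)) - (u 0 * conj (dv 0) - du 0 * conj (v 0))) := by
  have hu : ContinuousOn u (Set.Icc 0 ω) := HasDerivAt.continuousOn hu1
  have hv : ContinuousOn v (Set.Icc 0 ω) := HasDerivAt.continuousOn hv1
  have hcv : ContinuousOn (fun θ => conj (v θ)) (Set.Icc 0 ω) :=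
    Complex.continuous_conj.comp_continuousOn hv
  have hIcc : Set.uIcc 0 ω = Set.Icc 0 ω := Set.uIcc_of_le hω
  have hL : IntervalIntegrable (fun θ => (-(l ^ 2 * u θ + ddu θ)) * conj (v θ))
      MeasureTheory.volume 0 ω :=
    ContinuousOn.intervalIntegrable_of_Icc hω
      (((continuousOn_const.mul hu).add hu3).neg.mul hcv)
  have hR : IntervalIntegrable (fun θ => u θ * conj (-((conj l) ^ 2 * v θ + ddv θ)))
      MeasureTheory.volume 0 ω :=
    ContinuousOn.intervalIntegrable_of_Icc hω
      (hu.mul (Complex.continuous_conj.comp_continuousOn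
        ((continuousOn_const.mul hv).add hv3).neg))
  rw [← sub_eq_iff_eq_add', ← intervalIntegral.integral_sub hL hR]
  refine intervalIntegral.integral_eq_sub_of_hasDerivAt
    (f := fun θ => u θ * conj (dv θ) - du θ * conj (v θ)) (fun θ hθ => ?_) (hL.sub hR)
  rw [hIcc] at hθ
  have hd := ((hu1 θ hθ).mul (hv2 θ hθ).star).sub ((hu2 θ hθ).mul (hv1 θ hθ).star)
  refine hd.congr_deriv ?_
  simp only [map_neg, map_add, map_mul, map_pow, Complex.conj_conj, ← starRingEnd_apply]
  ring

/-- Integration-by-parts identity showing that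
`(g,h) ↦ (−(conj(λ)² + d²_θ)g, −(1/ε)(conj(λ)² + d²_θ)h)` with the stated boundary
conditions is the adjoint of the quasi-reversibility symbol `𝓛_ε(λ)`. -/
theorem adjoint_identity (ω ε : ℝ) (hω : 0 < ω) (hε : 0 < ε) (l : ℂ)
    (φ dφ ddφ ψ dψ ddψ g dg ddg h dh ddh : ℝ → ℂ)
    (hφ1 : ∀ θ ∈ Set.Icc (0:ℝ) ω, HasDerivAt φ (dφ θ) θ)
    (hφ2 : ∀ θ ∈ Set.Icc (0:ℝ) ω, HasDerivAt dφ (ddφ θ) θ)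
    (hφ3 : ContinuousOn ddφ (Set.Icc (0:ℝ) ω))
    (hψ1 : ∀ θ ∈ Set.Icc (0:ℝ) ω, HasDerivAt ψ (dψ θ) θ)
    (hψ2 : ∀ θ ∈ Set.Icc (0:ℝ) ω, HasDerivAt dψ (ddψ θ) θ)
    (hψ3 : ContinuousOn ddψ (Set.Icc (0:ℝ) ω))
    (hg1 : ∀ θ ∈ Set.Icc (0:ℝ) ω, HasDerivAt g (dg θ) θ)
    (hg2 : ∀ θ ∈ Set.Icc (0:ℝ) ω, HasDerivAt dg (ddg θ) θ)
    (hg3 : ContinuousOn ddg (Set.Icc (0:ℝ) ω))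
    (hh1 : ∀ θ ∈ Set.Icc (0:ℝ) ω, HasDerivAt h (dh θ) θ)
    (hh2 : ∀ θ ∈ Set.Icc (0:ℝ) ω, HasDerivAt dh (ddh θ) θ)
    (hh3 : ContinuousOn ddh (Set.Icc (0:ℝ) ω))
    (bc1 : φ 0 = 0) (bc2 : ψ ω = 0)
    (bc3 : dφ 0 - dψ 0 = 0) (bc4 : (ε : ℂ) * dφ ω + dψ ω = 0)
    (bc5 : dg ω = 0) (bc6 : dh 0 = 0)
    (bc7 : g ω - h ω = 0) (bc8 : (ε : ℂ) * g 0 + h 0 = 0) :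
    (∫ θ in (0:ℝ)..ω, (-(l ^ 2 * φ θ + ddφ θ)) * (starRingEnd ℂ) (g θ)) +
        (1 / (ε : ℂ)) * ∫ θ in (0:ℝ)..ω, (-(l ^ 2 * ψ θ + ddψ θ)) * (starRingEnd ℂ) (h θ)
      = (∫ θ in (0:ℝ)..ω,
            φ θ * (starRingEnd ℂ) (-(((starRingEnd ℂ) l) ^ 2 * g θ + ddg θ))) +
        (1 / (ε : ℂ)) * ∫ θ in (0:ℝ)..ω,
            ψ θ * (starRingEnd ℂ) (-(((starRingEnd ℂ) l) ^ 2 * h θ + ddh θ)) := by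
  have hε' : (ε : ℂ) ≠ 0 := by exact_mod_cast hε.ne'
  rw [green_identity hω.le l hφ1 hφ2 hφ3 hg1 hg2 hg3,
    green_identity hω.le l hψ1 hψ2 hψ3 hh1 hh2 hh3]
  have e3 : dψ 0 = dφ 0 := (sub_eq_zero.mp bc3).symm
  have e4 : dψ ω = -((ε : ℂ) * dφ ω) := eq_neg_of_add_eq_zero_right bc4
  have e7 : h ω = g ω := (sub_eq_zero.mp bc7).symm
  have e8 : h 0 = -((ε : ℂ) * g 0) := eq_neg_of_add_eq_zero_right bc8
  rw [e3, e4, e7, e8, bc1, bc2, bc5, bc6]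
  simp only [map_neg, map_mul, map_zero, Complex.conj_ofReal]
  field_simp
  ring
end

section
/- Let ω > 0 and ε > 0, set γ_ε = √(1 + 1/ε) + √(1/ε), and for k ∈ ℤ and ν ∈ {+1, −1} set λ_k^ν = (1/ω)·(π/2 + kπ + ν·i·log γ_ε). Define φ_k^ν(θ) = cos(λ_k^ν ω)·sin(λ_k^ν θ), ψ_k^ν(θ) = sin(λ_k^ν(θ − ω)), g_j^μ(θ) = cos(conj(λ_j^μ)·ω)·cos(conj(λ_j^μ)·(θ − ω)) and h_j^μ(θ) = cos(conj(λ_j^μ)·θ). Then for all j, k ∈ ℤ and ν, μ ∈ {+1, −1} such that j + k ≠ −1 or ν + μ ≠ 0, one has ∫₀^ω φ_k^ν(θ)·conj(g_j^μ(θ)) dθ + (1/ε)·∫₀^ω ψ_k^ν(θ)·conj(h_j^μ(θ)) dθ = d_k if (k, ν) = (j, μ), and = 0 otherwise, where d_k = (−1)^{k+1}·(ω/ε)·√(1 + 1/ε). -/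
/-!
Write `a = λ_k^ν`, `b = λ_j^μ`. Conjugating the adjoint eigenfunctions turns `conj b` into `b`, and
the product-to-sum formulas reduce both integrals to integrals of `sin ((a ± b) θ + d)`.

* If `a ≠ ± b`, the left-hand side is a multiple of `(cos bω - cos aω) (cos aω cos bω - 1/ε)`. Since
  `cos² aω = cos² bω = -1/ε`, this product vanishes (`pairing_eq_zero`).
* If `a = b ≠ 0`, the frequency `a + b` contributes nothing and the frequency zero contributes
  `½ ω sin aω (cos² aω - 1/ε) = -(ω/ε) sin aω` (`pairing_self`), where
  `sin aω = (-1)^k cosh (log γ_ε) = (-1)^k √(1 + 1/ε)`.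

The conditions `a ≠ ± b` are read off real and imaginary parts, using `log γ_ε > 0`; the latter and
the values of `sin aω`, `cos aω` come from `log γ_ε = arsinh √(1/ε)`.
-/

/-- The eigenvalue `λ_k^ν = (π/2 + kπ + ν i log γ_ε)/ω` with
`γ_ε = √(1+1/ε) + √(1/ε)`, for `k ∈ ℤ` and `ν ∈ {+1, −1}`. -/
noncomputable def lamQR (ω ε : ℝ) (k ν : ℤ) : ℂ :=
  (1 / (ω : ℂ)) * (((Real.pi : ℂ) / 2) + (k : ℂ) * (Real.pi : ℂ)
    + (ν : ℂ) * Complex.I * ((Real.log (Real.sqrt (1 + 1 / ε) + Real.sqrt (1 / ε)) : ℝ) : ℂ))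

/-- Eigenfunction `φ_k^ν(θ) = cos(λ_k^ν ω) sin(λ_k^ν θ)` of the symbol `𝓛_ε`. -/
noncomputable def phiQR (ω ε : ℝ) (k ν : ℤ) (θ : ℝ) : ℂ :=
  Complex.cos (lamQR ω ε k ν * (ω : ℂ)) * Complex.sin (lamQR ω ε k ν * (θ : ℂ))

/-- Eigenfunction `ψ_k^ν(θ) = sin(λ_k^ν (θ − ω))` of the symbol `𝓛_ε`. -/
noncomputable def psiQR (ω ε : ℝ) (k ν : ℤ) (θ : ℝ) : ℂ :=
  Complex.sin (lamQR ω ε k ν * ((θ : ℂ) - (ω : ℂ)))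

/-- Eigenfunction `g_j^μ(θ) = cos(conj(λ_j^μ) ω) cos(conj(λ_j^μ)(θ − ω))` of `𝓛*_ε`. -/
noncomputable def gQR (ω ε : ℝ) (j μ : ℤ) (θ : ℝ) : ℂ :=
  Complex.cos ((starRingEnd ℂ) (lamQR ω ε j μ) * (ω : ℂ)) *
    Complex.cos ((starRingEnd ℂ) (lamQR ω ε j μ) * ((θ : ℂ) - (ω : ℂ)))

/-- Eigenfunction `h_j^μ(θ) = cos(conj(λ_j^μ) θ)` of `𝓛*_ε`. -/
noncomputable def hQR (ω ε : ℝ) (j μ : ℤ) (θ : ℝ) : ℂ :=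
  Complex.cos ((starRingEnd ℂ) (lamQR ω ε j μ) * (θ : ℂ))

open Complex in
/-- The factor `c` is kept on the left so that the formula also holds for `c = 0`. -/
lemma mul_integral_sin (c d : ℂ) (ω : ℝ) :
    c * ∫ θ in (0:ℝ)..ω, sin (c * θ + d) = cos d - cos (c * ω + d) := by
  have h : ∀ θ : ℝ, HasDerivAt (fun θ : ℝ => -cos (c * θ + d)) (c * sin (c * θ + d)) θ := by
    intro θ
    have h1 : HasDerivAt (fun z : ℂ => -cos (c * z + d)) (c * sin (c * θ + d)) (θ : ℂ) := by
      have h2 : HasDerivAt (fun z : ℂ => c * z + d) c (θ : ℂ) := by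
        simpa using ((hasDerivAt_id (θ : ℂ)).const_mul c).add_const d
      exact h2.ccos.neg.congr_deriv (by ring)
    exact h1.comp_ofReal
  rw [← intervalIntegral.integral_const_mul,
    intervalIntegral.integral_eq_sub_of_hasDerivAt (fun θ _ => h θ)
      (Continuous.intervalIntegrable (by fun_prop) _ _)]
  simp
  ring

open Complex in
lemma integral_sin_mul_cos (a b p q : ℂ) (ω : ℝ) :
    ∫ θ in (0:ℝ)..ω, sin (a * θ + p) * cos (b * θ + q) =
      ((∫ θ in (0:ℝ)..ω, sin ((a + b) * θ + (p + q))) +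
        ∫ θ in (0:ℝ)..ω, sin ((a - b) * θ + (p - q))) / 2 := by
  rw [← intervalIntegral.integral_add (Continuous.intervalIntegrable (by fun_prop) _ _)
    (Continuous.intervalIntegrable (by fun_prop) _ _), ← intervalIntegral.integral_div]
  congr 1
  ext θ
  rw [show (a + b) * θ + (p + q) = (a * θ + p) + (b * θ + q) by ring,
    show (a - b) * θ + (p - q) = (a * θ + p) - (b * θ + q) by ring, sin_add (a * θ + p),
    sin_sub (a * θ + p)]
  ring

open Complex in
/-- The pairing of the theorem, for arbitrary complex frequencies `a` and `b`. -/
noncomputable def pairingQR (ω ε : ℝ) (a b : ℂ) : ℂ :=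
  cos (a * ω) * cos (b * ω) * (∫ θ in (0:ℝ)..ω, sin (a * θ + 0) * cos (b * θ + -(b * ω))) +
    (1 / (ε : ℂ)) * ∫ θ in (0:ℝ)..ω, sin (a * θ + -(a * ω)) * cos (b * θ + 0)

open Complex in
lemma pairing_eq_zero (ω ε : ℝ) (a b : ℂ) (ha : cos (a * ω) ^ 2 = -(1 / (ε : ℂ)))
    (hb : cos (b * ω) ^ 2 = -(1 / (ε : ℂ))) (hadd : a + b ≠ 0) (hsub : a - b ≠ 0) :
    pairingQR ω ε a b = 0 := by
  unfold pairingQR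
  rw [integral_sin_mul_cos, integral_sin_mul_cos]
  have h1 := mul_integral_sin (a + b) (0 + -(b * ω)) ω
  have h2 := mul_integral_sin (a - b) (0 - -(b * ω)) ω
  have h3 := mul_integral_sin (a + b) (-(a * ω) + 0) ω
  have h4 := mul_integral_sin (a - b) (-(a * ω) - 0) ω
  rw [show (a + b) * ω + (0 + -(b * ω)) = a * ω by ring, zero_add, cos_neg] at h1
  rw [show (a - b) * ω + (0 - -(b * ω)) = a * ω by ring, zero_sub, neg_neg] at h2
  rw [show (a + b) * ω + (-(a * ω) + 0) = b * ω by ring, add_zero, cos_neg] at h3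
  rw [show (a - b) * ω + (-(a * ω) - 0) = -(b * ω) by ring, sub_zero, cos_neg, cos_neg] at h4
  rw [mul_comm] at h1 h2 h3 h4
  rw [zero_add, zero_sub, neg_neg, add_zero, sub_zero, eq_div_of_mul_eq hadd h1,
    eq_div_of_mul_eq hsub h2, eq_div_of_mul_eq hadd h3, eq_div_of_mul_eq hsub h4,
    show (1 / (ε : ℂ)) = -cos (a * ω) ^ 2 by rw [ha, neg_neg]]
  have h5 : cos (b * ω) ^ 2 = cos (a * ω) ^ 2 := by rw [ha, hb]
  linear_combination (cos (a * ω) * (1 / (a + b) + 1 / (a - b)) / 2) * h5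

open Complex in
lemma pairing_self (ω ε : ℝ) (a : ℂ) (ha : cos (a * ω) ^ 2 = -(1 / (ε : ℂ))) (h0 : a ≠ 0) :
    pairingQR ω ε a a = -(ω / ε * sin (a * ω)) := by
  unfold pairingQR
  rw [integral_sin_mul_cos, integral_sin_mul_cos]
  have hadd : a + a ≠ 0 := by simpa [← two_mul] using h0
  have h1 := mul_integral_sin (a + a) (-(a * ω)) ω
  rw [show (a + a) * ω + -(a * ω) = a * ω by ring, cos_neg, sub_self] at h1
  have h2 := (mul_eq_zero.1 h1).resolve_left hadd
  simp only [zero_add, zero_sub, neg_neg, add_zero, sub_zero, h2, sub_self, zero_mul,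
    intervalIntegral.integral_const, sin_neg, real_smul]
  linear_combination (ω * sin (a * ω) / 2) * ha

lemma log_gamma_eq_arsinh (ε : ℝ) (hε : 0 < ε) :
    Real.log (Real.sqrt (1 + 1 / ε) + Real.sqrt (1 / ε)) = Real.arsinh (Real.sqrt (1 / ε)) := by
  rw [Real.arsinh, Real.sq_sqrt (by positivity), add_comm]

lemma lamQR_mul (ω ε : ℝ) (hω : 0 < ω) (hε : 0 < ε) (k ν : ℤ) :
    lamQR ω ε k ν * ω = (Real.arsinh (Real.sqrt (1 / ε)) : ℂ) * ν * Complex.I +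
      Real.pi / 2 + k * Real.pi := by
  have : (ω : ℂ) ≠ 0 := by exact_mod_cast hω.ne'
  rw [lamQR, log_gamma_eq_arsinh ε hε]
  field_simp
  ring

lemma sin_lamQR (ω ε : ℝ) (hω : 0 < ω) (hε : 0 < ε) (k ν : ℤ) (hν : ν = 1 ∨ ν = -1) :
    Complex.sin (lamQR ω ε k ν * ω) = (-1) ^ k * (Real.sqrt (1 + 1 / ε) : ℂ) := by
  have h := Real.cosh_arsinh (Real.sqrt (1 / ε))
  rw [Real.sq_sqrt (by positivity)] at h
  rw [lamQR_mul ω ε hω hε, Complex.sin_antiperiodic.add_int_mul_eq, Complex.sin_add_pi_div_two,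
    Complex.cos_mul_I, ← h, Int.cast_negOnePow, Complex.ofReal_cosh]
  rcases hν with rfl | rfl <;> simp only [Int.cast_one, Int.cast_neg, mul_one, mul_neg,
    Complex.cosh_neg]

lemma cos_lamQR_sq (ω ε : ℝ) (hω : 0 < ω) (hε : 0 < ε) (k ν : ℤ) (hν : ν = 1 ∨ ν = -1) :
    Complex.cos (lamQR ω ε k ν * ω) ^ 2 = -(1 / (ε : ℂ)) := by
  have h : (Real.sqrt (1 + 1 / ε) : ℂ) ^ 2 = 1 + 1 / ε := by
    exact_mod_cast Real.sq_sqrt (show 0 ≤ 1 + 1 / ε by positivity)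
  have h1 : ((-1 : ℂ) ^ k) ^ 2 = 1 := by
    rw [← zpow_natCast, ← zpow_mul, mul_comm, zpow_mul]; simp
  rw [Complex.cos_sq', sin_lamQR ω ε hω hε k ν hν, mul_pow, h, h1]
  ring

/-- An integer combination of `π` and `i L`, with `L ≠ 0` real, vanishes only trivially. -/
lemma int_comb_eq_zero {L : ℝ} (hL : L ≠ 0) {m n : ℤ}
    (h : (m : ℂ) * Real.pi + n * L * Complex.I = 0) : m = 0 ∧ n = 0 := by
  have hr := congrArg Complex.re h
  have hi := congrArg Complex.im h
  simp [Real.pi_ne_zero] at hr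
  simp [hL] at hi
  exact ⟨hr, hi⟩

/-- Biorthogonality between the eigenfunctions of the quasi-reversibility
symbol `𝓛_ε` and those of its adjoint `𝓛*_ε`: for `j + k ≠ −1` or `ν + μ ≠ 0`,
`∫₀^ω φ_k^ν conj(g_j^μ) + (1/ε) ∫₀^ω ψ_k^ν conj(h_j^μ) = δ_{νμ} δ_{kj} d_k` with
`d_k = (−1)^{k+1} (ω/ε) √(1 + 1/ε)`. -/
theorem biorthogonality (ω ε : ℝ) (hω : 0 < ω) (hε : 0 < ε) :
    ∀ j k ν μ : ℤ, (ν = 1 ∨ ν = -1) → (μ = 1 ∨ μ = -1) →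
      (j + k ≠ -1 ∨ ν + μ ≠ 0) →
      (∫ θ in (0:ℝ)..ω, phiQR ω ε k ν θ * (starRingEnd ℂ) (gQR ω ε j μ θ)) +
          (1 / (ε : ℂ)) * ∫ θ in (0:ℝ)..ω, psiQR ω ε k ν θ * (starRingEnd ℂ) (hQR ω ε j μ θ)
        = if k = j ∧ ν = μ then
            ((-1 : ℂ) ^ (k + 1)) * ((ω / ε : ℝ) : ℂ) * ((Real.sqrt (1 + 1 / ε) : ℝ) : ℂ)
          else 0 := by
  intro j k ν μ hν hμ hne
  have hω' : (ω : ℂ) ≠ 0 := by exact_mod_cast hω.ne'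
  have hL : Real.arsinh (Real.sqrt (1 / ε)) ≠ 0 :=
    (Real.arsinh_pos_iff.2 (Real.sqrt_pos.2 (by positivity))).ne'
  have ha := lamQR_mul ω ε hω hε k ν
  have hb := lamQR_mul ω ε hω hε j μ
  have hadd : lamQR ω ε k ν + lamQR ω ε j μ ≠ 0 := by
    intro h
    have := int_comb_eq_zero hL (m := j + k + 1) (n := ν + μ) (by
      push_cast
      linear_combination ω * h - ha - hb)
    omega
  have hpair : (∫ θ in (0:ℝ)..ω, phiQR ω ε k ν θ * (starRingEnd ℂ) (gQR ω ε j μ θ)) +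
      (1 / (ε : ℂ)) * (∫ θ in (0:ℝ)..ω, psiQR ω ε k ν θ * (starRingEnd ℂ) (hQR ω ε j μ θ)) =
      pairingQR ω ε (lamQR ω ε k ν) (lamQR ω ε j μ) := by
    rw [pairingQR]
    congr 1
    · rw [← intervalIntegral.integral_const_mul]
      congr 1
      ext θ
      simp only [phiQR, gQR, map_mul, map_sub, ← Complex.cos_conj, Complex.conj_conj,
        Complex.conj_ofReal]
      ring_nf
    · congr 2
      ext θ
      simp only [psiQR, hQR, map_mul, ← Complex.cos_conj, Complex.conj_conj, Complex.conj_ofReal]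
      ring_nf
  rw [hpair]
  split_ifs with hc
  · obtain ⟨rfl, rfl⟩ := hc
    rw [pairing_self ω ε _ (cos_lamQR_sq ω ε hω hε k ν hν) (by rintro h; simp [h] at hadd),
      sin_lamQR ω ε hω hε k ν hν, zpow_add_one₀ (by norm_num)]
    push_cast
    ring
  · refine pairing_eq_zero ω ε _ _ (cos_lamQR_sq ω ε hω hε k ν hν)
      (cos_lamQR_sq ω ε hω hε j μ hμ) hadd fun h => hc ?_
    have := int_comb_eq_zero hL (m := k - j) (n := ν - μ) (by
      push_cast
      linear_combination ω * h - ha + hb)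
    omega
end

section
/- Let ω > 0 and β ∈ ℝ with cos(βω) ≠ 0. Then there exists η > 0 such that for all τ ∈ ℝ and all X ∈ ℝ, X²·cos²(βω)·cosh²(τω) + (1 + X·sin(βω)·sinh(τω))² ≥ η·X·cosh(τω). -/
/-!
The constant `η = cos²(βω) / 2` works. Put `Y = X cosh(τω)` and `u = X sin(βω) sinh(τω)`; since
`|sinh| ≤ cosh` and `|sin| ≤ 1`, `u² ≤ Y²`. The claim becomes `η Y ≤ 2 η Y² + (1 + u)²` with
`0 < η ≤ 1`, which follows from `η Y ≤ η Y² + η/4` and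
`η Y² + (1 + u)² ≥ η (u² + (1 + u)²) ≥ η/2`.
-/

/-- If `cos(βω) ≠ 0`, there is `η > 0` such that for all `τ, X ∈ ℝ`,
`X² cos²(βω) cosh²(τω) + (1 + X sin(βω) sinh(τω))² ≥ η X cosh(τω)`. -/
theorem quadratic_positivity (ω β : ℝ) (hω : 0 < ω) (hβ : Real.cos (β * ω) ≠ 0) :
    ∃ η > (0:ℝ), ∀ τ X : ℝ,
      X ^ 2 * (Real.cos (β * ω)) ^ 2 * (Real.cosh (τ * ω)) ^ 2
          + (1 + X * Real.sin (β * ω) * Real.sinh (τ * ω)) ^ 2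
        ≥ η * X * Real.cosh (τ * ω) := by
  have hc : 0 < Real.cos (β * ω) ^ 2 := by positivity
  have hsc := Real.sin_sq_add_cos_sq (β * ω)
  refine ⟨Real.cos (β * ω) ^ 2 / 2, by positivity, fun τ X => ?_⟩
  have hC := Real.cosh_sq (τ * ω)
  -- With `k = cos² / 2`, `Y = X cosh` and `u = X sin sinh`, one has `u² ≤ Y²`, and the difference
  -- of the two sides is `k (Y - 1/2)² + (k Y² + (1 + u)² - k/4)`.
  have hu : (X * Real.sin (β * ω) * Real.sinh (τ * ω)) ^ 2 ≤ (X * Real.cosh (τ * ω)) ^ 2 := by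
    have h1 : Real.sin (β * ω) ^ 2 ≤ 1 := by linarith
    calc (X * Real.sin (β * ω) * Real.sinh (τ * ω)) ^ 2
        = X ^ 2 * (Real.sin (β * ω) ^ 2 * Real.sinh (τ * ω) ^ 2) := by ring
      _ ≤ X ^ 2 * (1 * Real.cosh (τ * ω) ^ 2) := by
          gcongr X ^ 2 * (?_ * ?_)
          linarith
      _ = (X * Real.cosh (τ * ω)) ^ 2 := by ring
  have hk1 : Real.cos (β * ω) ^ 2 / 2 ≤ 1 := by nlinarith [sq_nonneg (Real.sin (β * ω))]
  have hk0 : 0 ≤ Real.cos (β * ω) ^ 2 / 2 := by positivity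
  have hk2 : Real.cos (β * ω) ^ 2 = 2 * (Real.cos (β * ω) ^ 2 / 2) := by ring
  have key : ∀ k u Y : ℝ, 0 ≤ k → k ≤ 1 → u ^ 2 ≤ Y ^ 2 →
      k * Y ≤ 2 * k * Y ^ 2 + (1 + u) ^ 2 := by
    intro k u Y h0 h1 h
    -- `(1 + u)² ≥ k (1 + u)²` and `(1 + u)² + u² ≥ 1/2`.
    nlinarith [mul_le_mul_of_nonneg_left h h0, mul_nonneg h0 (sq_nonneg (Y - 1 / 2)),
      mul_nonneg (sub_nonneg.2 h1) (sq_nonneg (1 + u)), mul_nonneg h0 (sq_nonneg (2 * u + 1))]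
  have := key _ _ _ hk0 hk1 hu
  rw [← hk2] at this
  linarith
end

section
/- Let ω > 0 and λ ∈ ℂ. (i) If u : ℝ → ℂ is twice continuously differentiable on [0, ω] with u(0) = 0 and u'(ω) = 0, and f(θ) = −(u''(θ) + λ²·u(θ)) for θ ∈ [0, ω], then u'(0)·cos(λω) = ∫₀^ω f(θ)·cos(λ(θ − ω)) dθ. (ii) If v : ℝ → ℂ is twice continuously differentiable on [0, ω] with v(ω) = 0 and v'(0) = 0, and g(θ) = −(v''(θ) + λ²·v(θ)) for θ ∈ [0, ω], then v'(ω)·cos(λω) = −∫₀^ω g(θ)·cos(λθ) dθ. -/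
/-!
With `W θ = u' θ * cos (l (θ - c)) + l * u θ * sin (l (θ - c))`, the Wronskian of `u` and the
solution `cos (l (θ - c))` of the homogeneous equation, one has
`W' θ = (u'' θ + l² u θ) * cos (l (θ - c))`. The fundamental theorem of calculus
(`integral_source_mul_cos`) then expresses the integral of the source against the cosine through
the values of `W` at `0` and `ω`. The boundary conditions reduce these to a single term,
for `c = ω` in the first identity and `c = 0` in the second.
-/

/-- Green's formula for `u'' + l² u` against `cos (l (θ - c))`, for an arbitrary centre `c`. -/
lemma integral_source_mul_cos (ω : ℝ) (hω : 0 < ω) (l c : ℂ) (u du ddu : ℝ → ℂ)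
    (hu : ∀ θ ∈ Set.Icc (0:ℝ) ω, HasDerivAt u (du θ) θ)
    (hdu : ∀ θ ∈ Set.Icc (0:ℝ) ω, HasDerivAt du (ddu θ) θ)
    (hc : ContinuousOn ddu (Set.Icc (0:ℝ) ω)) :
    ∫ θ in (0:ℝ)..ω, (-(ddu θ + l ^ 2 * u θ)) * Complex.cos (l * ((θ : ℂ) - c)) =
      (du 0 * Complex.cos (l * (0 - c)) + l * u 0 * Complex.sin (l * (0 - c))) -
      (du ω * Complex.cos (l * (ω - c)) + l * u ω * Complex.sin (l * (ω - c))) := by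
  have hIcc : Set.uIcc (0:ℝ) ω = Set.Icc 0 ω := Set.uIcc_of_le hω.le
  have hucont : ContinuousOn u (Set.Icc (0:ℝ) ω) :=
    fun θ hθ => (hu θ hθ).continuousAt.continuousWithinAt
  have key := intervalIntegral.integral_eq_sub_of_hasDerivAt (a := (0:ℝ)) (b := ω)
    (f := fun θ : ℝ => -(du θ * Complex.cos (l * ((θ : ℂ) - c)) +
      l * u θ * Complex.sin (l * ((θ : ℂ) - c))))
    (f' := fun θ : ℝ => (-(ddu θ + l ^ 2 * u θ)) * Complex.cos (l * ((θ : ℂ) - c))) ?_ ?_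
  · rw [key]
    push_cast
    ring
  · intro θ hθ
    rw [hIcc] at hθ
    have hlin : HasDerivAt (fun θ : ℝ => l * ((θ : ℂ) - c)) (l * 1) θ :=
      ((Complex.ofRealCLM.hasDerivAt (x := θ)).sub_const c).const_mul l
    have hcos := (Complex.hasDerivAt_cos (l * ((θ : ℂ) - c))).comp θ hlin
    have hsin := (Complex.hasDerivAt_sin (l * ((θ : ℂ) - c))).comp θ hlin
    have h := (((hdu θ hθ).mul hcos).add (((hu θ hθ).const_mul l).mul hsin)).neg
    refine h.congr_deriv ?_
    simp only [Function.comp_apply]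
    ring
  · apply ContinuousOn.intervalIntegrable
    rw [hIcc]
    have hcos : Continuous (fun θ : ℝ => Complex.cos (l * ((θ : ℂ) - c))) := by fun_prop
    exact ((hc.add (hucont.const_mul (l ^ 2))).neg).mul hcos.continuousOn

/-- boundary-data identities obtained by multiplying
`−(u'' + λ²u) = f` by `cos(λ(θ−ω))` (resp. `−(v'' + λ²v) = g` by `cos(λθ)`) and
integrating by parts twice:
(i) if `u(0) = 0` and `u'(ω) = 0` then `u'(0) cos(λω) = ∫₀^ω f(θ) cos(λ(θ−ω)) dθ`;
(ii) if `v(ω) = 0` and `v'(0) = 0` then `v'(ω) cos(λω) = −∫₀^ω g(θ) cos(λθ) dθ`. -/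
theorem boundary_data_identities (ω : ℝ) (hω : 0 < ω) (l : ℂ) :
    (∀ u du ddu : ℝ → ℂ,
      (∀ θ ∈ Set.Icc (0:ℝ) ω, HasDerivAt u (du θ) θ) →
      (∀ θ ∈ Set.Icc (0:ℝ) ω, HasDerivAt du (ddu θ) θ) →
      ContinuousOn ddu (Set.Icc (0:ℝ) ω) →
      u 0 = 0 → du ω = 0 →
      du 0 * Complex.cos (l * (ω : ℂ)) =
        ∫ θ in (0:ℝ)..ω,
          (-(ddu θ + l ^ 2 * u θ)) * Complex.cos (l * ((θ : ℂ) - (ω : ℂ)))) ∧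
    (∀ v dv ddv : ℝ → ℂ,
      (∀ θ ∈ Set.Icc (0:ℝ) ω, HasDerivAt v (dv θ) θ) →
      (∀ θ ∈ Set.Icc (0:ℝ) ω, HasDerivAt dv (ddv θ) θ) →
      ContinuousOn ddv (Set.Icc (0:ℝ) ω) →
      v ω = 0 → dv 0 = 0 →
      dv ω * Complex.cos (l * (ω : ℂ)) =
        -∫ θ in (0:ℝ)..ω, (-(ddv θ + l ^ 2 * v θ)) * Complex.cos (l * (θ : ℂ))) := by
  constructor
  · intro u du ddu hu hdu hc h0 h1
    rw [integral_source_mul_cos ω hω l ω u du ddu hu hdu hc, h0, h1]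
    simp
  · intro v dv ddv hv hdv hc h0 h1
    have h := integral_source_mul_cos ω hω l 0 v dv ddv hv hdv hc
    simp only [sub_zero] at h
    rw [h, h0, h1]
    simp
end
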